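/- Let u be a Schwartz function on ℝ³. For all m ∈ ℝ and r > 0, there exists a constant C > 0, depending only on m and r, such that ‖[(1-Δ)^{r/2}, ⟨·⟩^m] u‖_{L²(ℝ³)} ≤ C ‖⟨·⟩^m u‖_{H^{r-1}(ℝ³)}, where [A,B] = AB - BA denotes the commutator. -/

import Mathlib

open MeasureTheory Real
open scoped FourierTransform SchwartzMap
noncomputable section
abbrev V := EuclideanSpace ℝ (Fin 3)
/-- Japanese bracket `⟨v⟩ = (1+|v|²)^{1/2}`. -/
def jb (v : V) : ℝ := (1 + ‖v‖^2) ^ ((1:ℝ)/2)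
/-- `L²` norm. -/
def l2norm (f : V → ℂ) : ℝ := (∫ v, ‖f v‖^2) ^ ((1:ℝ)/2)
/-- Sobolev `H^k` norm defined via the Fourier transform. -/
def Hnorm (k : ℝ) (f : V → ℂ) : ℝ := (∫ ξ, (jb ξ)^(2*k) * ‖𝓕 f ξ‖^2) ^ ((1:ℝ)/2)
/-- Weighted Sobolev norm `‖u‖_{H^k_l} = ‖⟨·⟩^l u‖_{H^k}`. -/
def HnormW (k l : ℝ) (f : V → ℂ) : ℝ := Hnorm k (fun v => ((jb v ^ l : ℝ) : ℂ) * f v)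
/-- The Fourier multiplier `(1-Δ)^{r/2} = ⟨D⟩^r` with symbol `(1+|ξ|²)^{r/2}`. -/
def besselOp (r : ℝ) (f : V → ℂ) : V → ℂ :=
  fun v => 𝓕⁻ (fun ξ => (((1 + ‖ξ‖^2) ^ (r/2) : ℝ) : ℂ) * 𝓕 f ξ) v

/-! Conjugation by a plane wave translates a Fourier multiplier, so by the mean value inequality and
Peetre's inequality the commutator of a symbol of order `r` with the plane wave of frequency `η`
maps `H^(r-1)` to `L²`, with a norm growing polynomially in `η`. The same gain of one derivative
therefore holds for every superposition of plane waves with rapidly decaying coefficients. Among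
these are `⟨x⟩ ^ s` for `s < 1` and the coordinates `K_j` of the unit vector `(1, x) / ⟨x⟩`: a Gamma
integral writes `P x * ⟨x⟩ ^ (-a)`, with `P` homogeneous, as an integral of dilates of the Schwartz
function `P x * exp (-π |x| ^ 2)`, to which Fourier inversion applies.

The commutator estimate for `⟨x⟩ ^ m` says that conjugating the multiplier `A` by `⟨x⟩ ^ m` changes
it only by an operator of order `r - 1`. For `0 ≤ m < 1` this is the case above. It passes from `m`
to `m ± 1` because `∑ K_j ^ 2 = 1` and `∑ x_j K_j = ⟨x⟩` reduce conjugation by `⟨x⟩ ^ (±1)` to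
commutators with the `K_j` and with the coordinates `x_j` (where `x_0 = 1`); the latter are again
Fourier multipliers, with symbol a derivative of that of `A`.
-/

section Bracket

variable {E : Type*} [NormedAddCommGroup E]

/-- The power `⟨x⟩ ^ s` of the Japanese bracket. A single function of the exponent `s`, rather than
a power of `⟨x⟩`, so that exponents add up by `bracketPow_add`. -/
def bracketPow (s : ℝ) (x : E) : ℝ := (1 + ‖x‖ ^ 2) ^ (s / 2)

lemma bracketPow_pos (s : ℝ) (x : E) : 0 < bracketPow s x := by
  unfold bracketPow
  positivity

lemma bracketPow_zero (x : E) : bracketPow 0 x = 1 := by simp [bracketPow]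

lemma bracketPow_two (x : E) : bracketPow 2 x = 1 + ‖x‖ ^ 2 := by simp [bracketPow]

lemma bracketPow_neg_arg (s : ℝ) (x : E) : bracketPow s (-x) = bracketPow s x := by
  simp [bracketPow]

lemma bracketPow_add (s t : ℝ) (x : E) :
    bracketPow (s + t) x = bracketPow s x * bracketPow t x := by
  rw [bracketPow, add_div, Real.rpow_add (by positivity)]
  rfl

lemma bracketPow_neg (s : ℝ) (x : E) : bracketPow (-s) x = (bracketPow s x)⁻¹ := by
  rw [bracketPow, neg_div, Real.rpow_neg (by positivity)]
  rfl

lemma bracketPow_mono {s t : ℝ} (h : s ≤ t) (x : E) : bracketPow s x ≤ bracketPow t x :=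
  Real.rpow_le_rpow_of_exponent_le (by linarith [sq_nonneg ‖x‖]) (by linarith)

lemma bracketPow_le_one {s : ℝ} (hs : s ≤ 0) (x : E) : bracketPow s x ≤ 1 :=
  (bracketPow_mono hs x).trans_eq (bracketPow_zero x)

lemma one_le_bracketPow {s : ℝ} (hs : 0 ≤ s) (x : E) : 1 ≤ bracketPow s x :=
  (bracketPow_zero x).symm.trans_le (bracketPow_mono hs x)

lemma norm_le_bracketPow_one (x : E) : ‖x‖ ≤ bracketPow 1 x := by
  refine abs_le_of_sq_le_sq' ?_ (bracketPow_pos 1 x).le |>.2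
  rw [sq (bracketPow 1 x), ← bracketPow_add, one_add_one_eq_two, bracketPow_two]
  linarith

lemma bracketPow_natCast (n : ℕ) (x : E) : bracketPow n x = bracketPow 1 x ^ n := by
  induction n with
  | zero => simp [bracketPow_zero]
  | succ n ih => rw [Nat.cast_succ, bracketPow_add, ih, pow_succ]

lemma norm_ofReal_bracketPow (s : ℝ) (x : E) : ‖(bracketPow s x : ℂ)‖ = bracketPow s x := by
  rw [Complex.norm_real, Real.norm_of_nonneg (bracketPow_pos s x).le]

lemma peetre_inequality (s : ℝ) (x y : E) :
    bracketPow s (x + y) ≤ 2 ^ (|s| / 2) * bracketPow |s| y * bracketPow s x := by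
  have sq_le (x y : E) : 1 + ‖x + y‖ ^ 2 ≤ 2 * (1 + ‖y‖ ^ 2) * (1 + ‖x‖ ^ 2) := by
    have := pow_le_pow_left₀ (norm_nonneg _) (norm_add_le x y) 2
    nlinarith [sq_nonneg (‖x‖ - ‖y‖), mul_nonneg (sq_nonneg ‖x‖) (sq_nonneg ‖y‖)]
  have of_nonneg {s : ℝ} (hs : 0 ≤ s) (x y : E) :
      bracketPow s (x + y) ≤ 2 ^ (s / 2) * bracketPow s y * bracketPow s x := by
    simp only [bracketPow]
    rw [← Real.mul_rpow (by positivity) (by positivity),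
      ← Real.mul_rpow (by positivity) (by positivity)]
    exact Real.rpow_le_rpow (by positivity) (sq_le x y) (by positivity)
  rcases le_total 0 s with hs | hs
  · rw [abs_of_nonneg hs]
    exact of_nonneg hs x y
  · have h := of_nonneg (neg_nonneg.2 hs) (x + y) (-y)
    rw [add_neg_cancel_right, bracketPow_neg_arg, bracketPow_neg s x, bracketPow_neg s (x + y),
      ← div_eq_mul_inv, le_div_iff₀ (bracketPow_pos s _), inv_mul_le_iff₀ (bracketPow_pos s x)] at h
    rw [abs_of_nonpos hs]
    linarith

end Bracket

section Symbol

open scoped ContDiff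

variable {E F : Type*} [NormedAddCommGroup E] [NormedAddCommGroup F] [NormedSpace ℝ F]

section NormedSpace

variable [NormedSpace ℝ E]

/-- The `n`-th derivative of `p` obeys the bound required of a symbol of order `r`. -/
def HasSymbolBound (r : ℝ) (p : E → F) (n : ℕ) : Prop :=
  ∃ C, 0 ≤ C ∧ ∀ x, ‖iteratedFDeriv ℝ n p x‖ ≤ C * bracketPow (r - n) x

/-- The symbol class `S^r` of Fourier multipliers: each derivative lowers the order of growth
by one. -/
structure IsSymbol (r : ℝ) (p : E → F) : Prop where
  contDiff : ContDiff ℝ ∞ p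
  hasSymbolBound : ∀ n, HasSymbolBound r p n

variable {r s : ℝ} {p : E → F} {n : ℕ}

lemma hasSymbolBound_zero_iff :
    HasSymbolBound r p 0 ↔ ∃ C, 0 ≤ C ∧ ∀ x, ‖p x‖ ≤ C * bracketPow r x := by
  simp [HasSymbolBound]

lemma hasSymbolBound_fderiv_iff :
    HasSymbolBound (r - 1) (fderiv ℝ p) n ↔ HasSymbolBound r p (n + 1) := by
  simp only [HasSymbolBound, norm_iteratedFDeriv_fderiv, Nat.cast_add_one]
  rw [sub_sub, add_comm (1 : ℝ)]

lemma HasSymbolBound.smul {f : E → ℝ} (hf : ContDiff ℝ ∞ f) (hp : ContDiff ℝ ∞ p)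
    (hf' : ∀ k ≤ n, HasSymbolBound r f k) (hp' : ∀ k ≤ n, HasSymbolBound s p k) :
    HasSymbolBound (r + s) (fun x ↦ f x • p x) n := by
  choose! C hC hfC using hf'
  choose! D hD hpD using hp'
  refine ⟨∑ k ∈ Finset.range (n + 1), n.choose k * C k * D (n - k),
    Finset.sum_nonneg fun k hk ↦ ?_, fun x ↦ ?_⟩
  · have hk : k ≤ n := Nat.lt_succ_iff.1 (Finset.mem_range.1 hk)
    exact mul_nonneg (mul_nonneg (Nat.cast_nonneg _) (hC k hk)) (hD _ (n.sub_le k))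
  refine (norm_iteratedFDeriv_smul_le hf hp x (mod_cast le_top)).trans ?_
  rw [Finset.sum_mul]
  refine Finset.sum_le_sum fun k hk ↦ ?_
  have hk : k ≤ n := Nat.lt_succ_iff.1 (Finset.mem_range.1 hk)
  calc n.choose k * ‖iteratedFDeriv ℝ k f x‖ * ‖iteratedFDeriv ℝ (n - k) p x‖
      ≤ n.choose k * (C k * bracketPow (r - k) x) *
          (D (n - k) * bracketPow (s - (n - k : ℕ)) x) := by
        gcongr
        · exact mul_nonneg (Nat.cast_nonneg _) (mul_nonneg (hC k hk) (bracketPow_pos _ x).le)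
        · exact hfC k hk x
        · exact hpD _ (n.sub_le k) x
    _ = n.choose k * C k * D (n - k) * bracketPow (r + s - n) x := by
        rw [show r + s - n = (r - k) + (s - (n - k : ℕ)) by rw [Nat.cast_sub hk]; ring,
          bracketPow_add]
        ring

lemma isSymbol_continuousLinearMap (L : E →L[ℝ] F) : IsSymbol 1 L := by
  refine ⟨L.contDiff, fun n ↦ ⟨‖L‖, norm_nonneg L, fun x ↦ ?_⟩⟩
  rcases n with _ | n
  · simpa using (L.le_opNorm x).trans <| by gcongr; exact norm_le_bracketPow_one x
  · rw [← norm_iteratedFDeriv_fderiv, show fderiv ℝ L = fun _ ↦ L from funext fun _ ↦ L.fderiv]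
    rcases n with _ | n
    · simp [bracketPow_zero]
    · rw [iteratedFDeriv_const_of_ne n.succ_ne_zero]
      simpa using mul_nonneg (norm_nonneg L) (bracketPow_pos _ x).le

namespace IsSymbol

variable {G : Type*} [NormedAddCommGroup G] [NormedSpace ℝ G]

lemma exists_norm_le (hp : IsSymbol r p) : ∃ C, 0 ≤ C ∧ ∀ x, ‖p x‖ ≤ C * bracketPow r x :=
  hasSymbolBound_zero_iff.1 (hp.hasSymbolBound 0)

lemma fderiv (hp : IsSymbol r p) : IsSymbol (r - 1) (fderiv ℝ p) :=
  ⟨hp.contDiff.fderiv_right (by simp), fun n ↦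
    hasSymbolBound_fderiv_iff.2 (hp.hasSymbolBound (n + 1))⟩

lemma clm_comp (L : F →L[ℝ] G) (hp : IsSymbol r p) : IsSymbol r (fun x ↦ L (p x)) := by
  refine ⟨L.contDiff.comp hp.contDiff, fun n ↦ ?_⟩
  obtain ⟨C, hC, h⟩ := hp.hasSymbolBound n
  refine ⟨‖L‖ * C, by positivity, fun x ↦ ?_⟩
  calc ‖iteratedFDeriv ℝ n (L ∘ p) x‖ ≤ ‖L‖ * ‖iteratedFDeriv ℝ n p x‖ :=
        L.norm_iteratedFDeriv_comp_left hp.contDiff.contDiffAt (mod_cast le_top)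
    _ ≤ ‖L‖ * C * bracketPow (r - n) x := by
        rw [mul_assoc]
        gcongr
        exact h x

lemma exists_norm_sub_le (hp : IsSymbol r p) : ∃ C, 0 ≤ C ∧ ∀ x y,
    ‖p (x + y) - p x‖ ≤ C * (‖y‖ * bracketPow |r - 1| y) * bracketPow (r - 1) x := by
  obtain ⟨C, hC, h⟩ := hp.fderiv.exists_norm_le
  refine ⟨C * 2 ^ (|r - 1| / 2), by positivity, fun x y ↦ ?_⟩
  have hderiv : ∀ z ∈ Metric.closedBall x ‖y‖, ‖_root_.fderiv ℝ p z‖ ≤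
      C * (2 ^ (|r - 1| / 2) * bracketPow |r - 1| y * bracketPow (r - 1) x) := fun z hz ↦ by
    refine (h z).trans (mul_le_mul_of_nonneg_left ?_ hC)
    have hz : ‖z - x‖ ≤ ‖y‖ := mem_closedBall_iff_norm.1 hz
    calc bracketPow (r - 1) z = bracketPow (r - 1) (x + (z - x)) := by rw [add_sub_cancel]
      _ ≤ 2 ^ (|r - 1| / 2) * bracketPow |r - 1| (z - x) * bracketPow (r - 1) x :=
        peetre_inequality ..
      _ ≤ _ := by
        have := (bracketPow_pos (r - 1) x).le
        unfold bracketPow at this ⊢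
        gcongr
  have hsub := (convex_closedBall x ‖y‖).norm_image_sub_le_of_norm_fderiv_le
    (fun z _ ↦ hp.contDiff.differentiable (by simp) z) hderiv
    (Metric.mem_closedBall_self (norm_nonneg y)) (y := x + y) (by simp)
  rw [add_sub_cancel_left] at hsub
  linarith

end IsSymbol

end NormedSpace

variable [InnerProductSpace ℝ E]

/-- Both `⟨x⟩ ^ s` and the Gaussian fall under this criterion, the latter as a constant family. -/
lemma isSymbol_of_hasFDerivAt {f : ℝ → E → ℝ} {c : ℝ → ℝ} (hf : ∀ s, ContDiff ℝ ∞ (f s))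
    (hbound : ∀ s, ∃ C, 0 ≤ C ∧ ∀ x, ‖f s x‖ ≤ C * bracketPow s x)
    (hderiv : ∀ s x, HasFDerivAt (f s) (f (s - 2) x • c s • innerSL ℝ x) x) (s : ℝ) :
    IsSymbol s (f s) := by
  refine ⟨hf s, fun n ↦ ?_⟩
  induction n using Nat.strong_induction_on generalizing s with | _ n ih
  rcases n with _ | n
  · exact hasSymbolBound_zero_iff.2 (hbound s)
  · rw [← hasSymbolBound_fderiv_iff, funext fun x ↦ (hderiv s x).fderiv,
      show s - 1 = s - 2 + 1 by ring]
    have hlin : IsSymbol 1 (fun x : E ↦ c s • innerSL ℝ x) :=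
      isSymbol_continuousLinearMap (c s • innerSL ℝ)
    exact .smul (hf _) hlin.contDiff (fun k hk ↦ ih k (Nat.lt_succ_of_le hk) _)
      fun k _ ↦ hlin.hasSymbolBound k

lemma isSymbol_bracketPow (s : ℝ) : IsSymbol s (bracketPow s : E → ℝ) := by
  refine isSymbol_of_hasFDerivAt (f := bracketPow) (c := id)
    (fun s ↦ (Function.hasTemperateGrowth_one_add_norm_sq_rpow E (s / 2)).1)
    (fun s ↦ ⟨1, zero_le_one, fun x ↦ ?_⟩) (fun s x ↦ ?_) s
  · rw [one_mul, Real.norm_of_nonneg (bracketPow_pos s x).le]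
  · refine (((hasStrictFDerivAt_norm_sq x).hasFDerivAt.const_add 1).rpow_const (p := s / 2)
      (.inl (by positivity))).congr_fderiv ?_
    ext y
    simp [bracketPow, sub_div]
    ring

lemma IsSymbol.hasTemperateGrowth {r : ℝ} {p : E → F} (hp : IsSymbol r p) :
    p.HasTemperateGrowth := by
  refine ⟨hp.contDiff, fun n ↦ ?_⟩
  obtain ⟨C, hC, h⟩ := hp.hasSymbolBound n
  obtain ⟨k, D, hD⟩ : ∃ k D, ∀ x : E, ‖iteratedFDeriv ℝ 0 (bracketPow (r - n)) x‖ ≤ _ :=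
    (Function.hasTemperateGrowth_one_add_norm_sq_rpow E ((r - n) / 2)).2 0
  refine ⟨k, C * D, fun x ↦ (h x).trans ?_⟩
  rw [mul_assoc]
  gcongr
  simpa [abs_of_pos (bracketPow_pos _ x)] using hD x

lemma isSymbol_ofReal_bracketPow (s : ℝ) : IsSymbol s fun x : E ↦ (bracketPow s x : ℂ) :=
  (isSymbol_bracketPow s).clm_comp Complex.ofRealCLM

lemma hasTemperateGrowth_bracketPow (s : ℝ) :
    (fun x : E ↦ (bracketPow s x : ℂ)).HasTemperateGrowth :=
  (isSymbol_ofReal_bracketPow s).hasTemperateGrowth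

end Symbol

open SchwartzMap

section Sobolev

variable {E : Type*} [NormedAddCommGroup E] [InnerProductSpace ℝ E]

lemma smulLeftCLM_mul_smulLeftCLM {φ ψ : E → ℂ} (hφ : φ.HasTemperateGrowth)
    (hψ : ψ.HasTemperateGrowth) :
    smulLeftCLM ℂ φ * smulLeftCLM ℂ ψ = smulLeftCLM (E := E) ℂ (φ * ψ) :=
  smulLeftCLM_compL_smulLeftCLM hφ hψ

/-- Multiplication by `⟨x⟩ ^ s` on Schwartz functions. -/
def weightCLM (s : ℝ) : 𝓢(E, ℂ) →L[ℂ] 𝓢(E, ℂ) :=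
  smulLeftCLM ℂ fun x ↦ (bracketPow s x : ℂ)

lemma weightCLM_apply (s : ℝ) (f : 𝓢(E, ℂ)) (x : E) : weightCLM s f x = bracketPow s x * f x :=
  smulLeftCLM_apply_apply (hasTemperateGrowth_bracketPow s) f x

lemma weightCLM_zero : weightCLM 0 = (1 : 𝓢(E, ℂ) →L[ℂ] 𝓢(E, ℂ)) := by
  ext f x
  simp [weightCLM_apply, bracketPow_zero]

lemma weightCLM_mul (s t : ℝ) :
    weightCLM s * weightCLM t = (weightCLM (s + t) : 𝓢(E, ℂ) →L[ℂ] 𝓢(E, ℂ)) := by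
  ext f x
  simp [weightCLM_apply, bracketPow_add, mul_assoc]

variable [FiniteDimensional ℝ E] [MeasurableSpace E] [BorelSpace E]

/-- The Bessel potential `⟨D⟩ ^ s = (1 - Δ) ^ (s / 2)` on Schwartz functions, in the normalisation
of `𝓕` in which its symbol is `⟨ξ⟩ ^ s`. -/
def besselCLM (s : ℝ) : 𝓢(E, ℂ) →L[ℂ] 𝓢(E, ℂ) :=
  fourierMultiplierCLM ℂ fun ξ ↦ (bracketPow s ξ : ℂ)

/-- The norm of the Sobolev space `H^s`, restricted to Schwartz functions. -/
def sobolevSeminorm (E : Type*) [NormedAddCommGroup E] [InnerProductSpace ℝ E]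
    [FiniteDimensional ℝ E] [MeasurableSpace E] [BorelSpace E] (s : ℝ) : Seminorm ℂ 𝓢(E, ℂ) :=
  (normSeminorm ℂ (Lp ℂ 2 (volume : Measure E))).comp
    (toLpCLM ℂ ℂ 2 volume ∘L besselCLM s : 𝓢(E, ℂ) →L[ℂ] Lp ℂ 2 volume).toLinearMap

lemma fourier_fourierMultiplierCLM (p : E → ℂ) (f : 𝓢(E, ℂ)) :
    𝓕 (fourierMultiplierCLM ℂ p f) = smulLeftCLM ℂ p (𝓕 f) := by
  rw [fourierMultiplierCLM_apply, FourierTransform.fourier_fourierInv_eq]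

lemma fourier_besselCLM (s : ℝ) (f : 𝓢(E, ℂ)) : 𝓕 (besselCLM s f) = weightCLM s (𝓕 f) :=
  fourier_fourierMultiplierCLM _ f

lemma sobolevSeminorm_apply (s : ℝ) (f : 𝓢(E, ℂ)) :
    sobolevSeminorm E s f = ‖(weightCLM s (𝓕 f)).toLp 2‖ := by
  rw [← fourier_besselCLM, norm_fourier_toL2_eq]
  rfl

lemma sobolevSeminorm_zero (f : 𝓢(E, ℂ)) : sobolevSeminorm E 0 f = ‖f.toLp 2‖ := by
  rw [sobolevSeminorm_apply, weightCLM_zero, one_apply_eq_self, norm_fourier_toL2_eq]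

lemma sobolevSeminorm_besselCLM (s t : ℝ) (f : 𝓢(E, ℂ)) :
    sobolevSeminorm E t (besselCLM s f) = sobolevSeminorm E (t + s) f := by
  rw [sobolevSeminorm_apply, fourier_besselCLM, sobolevSeminorm_apply, ← weightCLM_mul]
  rfl

lemma norm_toL2_le_of_norm_le {f g : 𝓢(E, ℂ)} {C : ℝ} (h : ∀ x, ‖f x‖ ≤ C * ‖g x‖) :
    ‖f.toLp 2‖ ≤ C * ‖g.toLp 2‖ := by
  refine Lp.norm_le_mul_norm_of_ae_le_mul ?_
  filter_upwards [f.coeFn_toLp 2, g.coeFn_toLp 2] with x hf hg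
  rw [hf, hg]
  exact h x

lemma sobolevSeminorm_fourierMultiplierCLM_le {p : E → ℂ} {C s : ℝ} (hp : p.HasTemperateGrowth)
    (h : ∀ ξ, ‖p ξ‖ ≤ C * bracketPow s ξ) (t : ℝ) (f : 𝓢(E, ℂ)) :
    sobolevSeminorm E t (fourierMultiplierCLM ℂ p f) ≤ C * sobolevSeminorm E (t + s) f := by
  rw [sobolevSeminorm_apply, fourier_fourierMultiplierCLM, sobolevSeminorm_apply]
  refine norm_toL2_le_of_norm_le fun ξ ↦ ?_
  simp only [weightCLM_apply, smulLeftCLM_apply_apply hp, norm_smul, norm_mul,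
    norm_ofReal_bracketPow]
  rw [bracketPow_add]
  calc bracketPow t ξ * (‖p ξ‖ * ‖𝓕 f ξ‖)
      ≤ bracketPow t ξ * (C * bracketPow s ξ * ‖𝓕 f ξ‖) := by
        have := (bracketPow_pos t ξ).le
        gcongr
        exact h ξ
    _ = C * (bracketPow t ξ * bracketPow s ξ * ‖𝓕 f ξ‖) := by ring

lemma sobolevSeminorm_mono {s t : ℝ} (h : s ≤ t) (f : 𝓢(E, ℂ)) :
    sobolevSeminorm E s f ≤ sobolevSeminorm E t f := by
  simp only [sobolevSeminorm_apply]
  refine (norm_toL2_le_of_norm_le (C := 1) fun ξ ↦ ?_).trans_eq (one_mul _)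
  simp only [weightCLM_apply, norm_mul, norm_ofReal_bracketPow, one_mul]
  gcongr
  exact bracketPow_mono h ξ

/-- `A` extends to a bounded operator from `H^s` to `H^t`. -/
def MapsSobolev (s t : ℝ) (A : 𝓢(E, ℂ) →L[ℂ] 𝓢(E, ℂ)) : Prop :=
  ∃ C, 0 ≤ C ∧ ∀ f, sobolevSeminorm E t (A f) ≤ C * sobolevSeminorm E s f

namespace MapsSobolev

variable {r s t : ℝ} {A B : 𝓢(E, ℂ) →L[ℂ] 𝓢(E, ℂ)}

lemma mono (hA : MapsSobolev s t A) (h : s ≤ r) : MapsSobolev r t A := by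
  obtain ⟨C, hC, hA⟩ := hA
  exact ⟨C, hC, fun f ↦ (hA f).trans (by gcongr; exact sobolevSeminorm_mono h f)⟩

lemma neg (hA : MapsSobolev s t A) : MapsSobolev s t (-A) := by
  simpa only [MapsSobolev, neg_apply, map_neg_eq_map] using hA

lemma add (hA : MapsSobolev s t A) (hB : MapsSobolev s t B) : MapsSobolev s t (A + B) := by
  obtain ⟨C, hC, h⟩ := hA
  obtain ⟨D, hD, h'⟩ := hB
  refine ⟨C + D, by positivity, fun f ↦ (map_add_le_add _ _ _).trans ?_⟩
  rw [add_mul]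
  exact add_le_add (h f) (h' f)

lemma sub (hA : MapsSobolev s t A) (hB : MapsSobolev s t B) : MapsSobolev s t (A - B) := by
  rw [sub_eq_add_neg]
  exact hA.add hB.neg

lemma sum {ι : Type*} (u : Finset ι) {A : ι → 𝓢(E, ℂ) →L[ℂ] 𝓢(E, ℂ)}
    (hA : ∀ i ∈ u, MapsSobolev s t (A i)) : MapsSobolev s t (∑ i ∈ u, A i) :=
  Finset.sum_induction A _ (fun _ _ ↦ add) ⟨0, le_rfl, fun f ↦ by simp⟩ hA

lemma mul (hA : MapsSobolev r t A) (hB : MapsSobolev s r B) : MapsSobolev s t (A * B) := by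
  obtain ⟨C, hC, h⟩ := hA
  obtain ⟨D, hD, h'⟩ := hB
  refine ⟨C * D, by positivity, fun f ↦ (h (B f)).trans ?_⟩
  rw [mul_assoc]
  gcongr
  exact h' f

end MapsSobolev

lemma IsSymbol.mapsSobolev {r : ℝ} {p : E → ℂ} (hp : IsSymbol r p) (t : ℝ) :
    MapsSobolev (t + r) t (fourierMultiplierCLM ℂ p) := by
  obtain ⟨C, hC, h⟩ := hp.exists_norm_le
  exact ⟨C, hC, sobolevSeminorm_fourierMultiplierCLM_le hp.hasTemperateGrowth h t⟩

lemma mapsSobolev_smulLeftCLM_zero {φ : E → ℂ} {C : ℝ} (hφ : φ.HasTemperateGrowth)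
    (h : ∀ x, ‖φ x‖ ≤ C) : MapsSobolev 0 0 (smulLeftCLM ℂ φ) := by
  have hC : 0 ≤ C := (norm_nonneg _).trans (h 0)
  refine ⟨C, hC, fun f ↦ ?_⟩
  rw [sobolevSeminorm_zero, sobolevSeminorm_zero]
  refine norm_toL2_le_of_norm_le fun x ↦ ?_
  rw [smulLeftCLM_apply_apply hφ, norm_smul]
  gcongr
  exact h x

end Sobolev

section PlaneWave

variable {E : Type*} [NormedAddCommGroup E] [InnerProductSpace ℝ E]

/-- The character `x ↦ exp (2πi⟨x, η⟩)` of frequency `η`. -/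
def planeWave (η x : E) : ℂ := Complex.exp ((2 * π * inner ℝ x η : ℝ) * Complex.I)

lemma norm_planeWave (η x : E) : ‖planeWave η x‖ = 1 := Complex.norm_exp_ofReal_mul_I _

lemma planeWave_zero_right (η : E) : planeWave η 0 = 1 := by simp [planeWave]

lemma continuous_planeWave : Continuous fun z : E × E ↦ planeWave z.1 z.2 := by
  unfold planeWave
  fun_prop

lemma planeWave_smul_left (τ : ℝ) (η x : E) : planeWave (τ • η) x = planeWave η (τ • x) := by
  simp [planeWave, inner_smul_left, inner_smul_right]

lemma norm_planeWave_sub_one_le (η x : E) : ‖planeWave η x - 1‖ ≤ 2 * π * (‖η‖ * ‖x‖) := by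
  rw [planeWave, mul_comm _ Complex.I]
  refine Real.norm_exp_I_mul_ofReal_sub_one_le.trans ?_
  rw [norm_mul, Real.norm_of_nonneg Real.two_pi_pos.le, mul_comm ‖η‖]
  gcongr
  exact norm_inner_le_norm x η

lemma hasTemperateGrowth_planeWave (η : E) : (planeWave η).HasTemperateGrowth := by
  have hderiv (n : ℕ) :
      iteratedDeriv n (fun t : ℝ ↦ Complex.exp (Complex.ofRealCLM t * Complex.I)) =
        fun t ↦ Complex.I ^ n * Complex.exp (Complex.ofRealCLM t * Complex.I) := by
    induction n with
    | zero => simp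
    | succ n ih =>
      rw [iteratedDeriv_succ, ih]
      ext t
      rw [((Complex.ofRealCLM.hasDerivAt.mul_const Complex.I).cexp.const_mul _).deriv]
      simp
      ring
  have hexp : (fun t ↦ Complex.exp (Complex.ofRealCLM t * Complex.I)).HasTemperateGrowth := by
    refine ⟨by fun_prop, fun n ↦ ⟨0, 1, fun t ↦ ?_⟩⟩
    rw [norm_iteratedFDeriv_eq_norm_iteratedDeriv, hderiv]
    simp [Complex.norm_exp_ofReal_mul_I]
  have hinner : (fun x : E ↦ 2 * π * inner ℝ x η).HasTemperateGrowth := by fun_prop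
  exact hexp.comp hinner

lemma hasTemperateGrowth_translate_sub {p : E → ℂ} (hp : p.HasTemperateGrowth) (η : E) :
    (fun ξ ↦ p (ξ + η) - p ξ).HasTemperateGrowth := by
  have hshift : (fun ξ ↦ ξ + η).HasTemperateGrowth := by fun_prop
  exact (hp.comp hshift).sub hp

lemma commutator_apply (A B : 𝓢(E, ℂ) →L[ℂ] 𝓢(E, ℂ)) (f : 𝓢(E, ℂ)) :
    ⁅A, B⁆ f = A (B f) - B (A f) := rfl

variable [FiniteDimensional ℝ E] [MeasurableSpace E] [BorelSpace E]

lemma fourier_smulLeftCLM_planeWave (η : E) (f : 𝓢(E, ℂ)) (ξ : E) :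
    𝓕 (smulLeftCLM ℂ (planeWave η) f) ξ = 𝓕 f (ξ - η) := by
  simp only [fourier_coe, Real.fourier_eq',
    smulLeftCLM_apply_apply (hasTemperateGrowth_planeWave η), smul_eq_mul, planeWave,
    ← mul_assoc, ← Complex.exp_add, ← add_mul]
  congr! 4 with x
  rw [inner_sub_right]
  push_cast
  ring

lemma commutator_planeWave_apply {p : E → ℂ} (hp : p.HasTemperateGrowth) (η : E) (f : 𝓢(E, ℂ)) :
    ⁅fourierMultiplierCLM ℂ p, smulLeftCLM ℂ (planeWave η)⁆ f =
      smulLeftCLM ℂ (planeWave η) (fourierMultiplierCLM ℂ (fun ξ ↦ p (ξ + η) - p ξ) f) := by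
  apply (FourierTransform.fourierCLE ℂ 𝓢(E, ℂ)).injective
  ext ξ
  simp only [commutator_apply, sub_apply, map_sub, FourierTransform.fourierCLE_apply,
    fourier_fourierMultiplierCLM, fourier_smulLeftCLM_planeWave, smulLeftCLM_apply_apply hp,
    smulLeftCLM_apply_apply (hasTemperateGrowth_translate_sub hp η), smul_eq_mul, sub_add_cancel]
  ring

lemma IsSymbol.exists_norm_commutator_planeWave_le {r : ℝ} {p : E → ℂ} (hp : IsSymbol r p) :
    ∃ C, 0 ≤ C ∧ ∀ η f, ‖(⁅fourierMultiplierCLM ℂ p, smulLeftCLM ℂ (planeWave η)⁆ f).toLp 2‖ ≤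
      C * (‖η‖ * bracketPow |r - 1| η) * sobolevSeminorm E (r - 1) f := by
  obtain ⟨C, hC, h⟩ := hp.exists_norm_sub_le
  refine ⟨C, hC, fun η f ↦ ?_⟩
  have hunit (g : 𝓢(E, ℂ)) : ‖(smulLeftCLM ℂ (planeWave η) g).toLp 2‖ ≤ ‖g.toLp 2‖ := by
    refine (norm_toL2_le_of_norm_le (C := 1) fun x ↦ ?_).trans_eq (one_mul _)
    rw [smulLeftCLM_apply_apply (hasTemperateGrowth_planeWave η), norm_smul, norm_planeWave]
  rw [commutator_planeWave_apply hp.hasTemperateGrowth]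
  refine (hunit _).trans ?_
  rw [← sobolevSeminorm_zero, ← zero_add (r - 1)]
  refine sobolevSeminorm_fourierMultiplierCLM_le
    (hasTemperateGrowth_translate_sub hp.hasTemperateGrowth η) (fun ξ ↦ ?_) 0 f
  rw [zero_add]
  exact h ξ η

end PlaneWave

section Superposition

open scoped ComplexConjugate

variable {E : Type*} [NormedAddCommGroup E] [InnerProductSpace ℝ E]

lemma hasTemperateGrowth_conj {p : E → ℂ} (hp : p.HasTemperateGrowth) :
    (fun ξ ↦ conj (p ξ)).HasTemperateGrowth :=
  (Complex.conjCLE : ℂ →L[ℝ] ℂ).hasTemperateGrowth.comp hp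

variable [FiniteDimensional ℝ E] [MeasurableSpace E] [BorelSpace E]

/-- Commuting a Fourier multiplier with multiplication by `φ` gains one derivative: the commutator
with a symbol of order `r` has order `r - 1`. -/
def HasCommutatorGain (φ : E → ℂ) : Prop :=
  ∀ ⦃r : ℝ⦄ ⦃p : E → ℂ⦄, IsSymbol r p →
    MapsSobolev (r - 1) 0 ⁅fourierMultiplierCLM ℂ p, smulLeftCLM ℂ φ⁆

lemma HasCommutatorGain.add {φ ψ : E → ℂ} (hφ : φ.HasTemperateGrowth)
    (hψ : ψ.HasTemperateGrowth) (hφ' : HasCommutatorGain φ) (hψ' : HasCommutatorGain ψ) :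
    HasCommutatorGain (φ + ψ) := fun r p hp ↦ by
  rw [smulLeftCLM_add hφ hψ, show ∀ A B C : 𝓢(E, ℂ) →L[ℂ] 𝓢(E, ℂ), ⁅A, B + C⁆ = ⁅A, B⁆ + ⁅A, C⁆ by
    intros; simp only [Ring.lie_def]; noncomm_ring]
  exact (hφ' hp).add (hψ' hp)

lemma inner_toL2_fourierMultiplierCLM {p : E → ℂ} (hp : p.HasTemperateGrowth) (f g : 𝓢(E, ℂ)) :
    inner ℂ (f.toLp 2) ((fourierMultiplierCLM ℂ p g).toLp 2) =
      inner ℂ ((fourierMultiplierCLM ℂ (fun ξ ↦ conj (p ξ)) f).toLp 2) (g.toLp 2) := by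
  rw [← inner_fourier_toL2_eq, ← inner_fourier_toL2_eq _ g, inner_toL2_toL2_eq _ _ volume,
    inner_toL2_toL2_eq _ _ volume]
  simp only [fourier_fourierMultiplierCLM, smulLeftCLM_apply_apply hp,
    smulLeftCLM_apply_apply (hasTemperateGrowth_conj hp), RCLike.inner_apply, smul_eq_mul, map_mul,
    Complex.conj_conj]
  congr! 2
  ring

lemma toL2_sub (f g : 𝓢(E, ℂ)) : (f - g).toLp 2 volume = f.toLp 2 volume - g.toLp 2 volume :=
  map_sub (toLpCLM ℂ ℂ 2 volume) f g

lemma exists_inner_commutator_eq_integral {p : E → ℂ} (hp : p.HasTemperateGrowth)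
    (f h : 𝓢(E, ℂ)) : ∃ H : 𝓢(E, ℂ), ∀ φ : E → ℂ, φ.HasTemperateGrowth →
      inner ℂ (h.toLp 2) ((⁅fourierMultiplierCLM ℂ p, smulLeftCLM ℂ φ⁆ f).toLp 2) =
        ∫ x, φ x * H x := by
  let h' := fourierMultiplierCLM ℂ (fun ξ ↦ conj (p ξ)) h
  let f' := fourierMultiplierCLM ℂ p f
  have hh := hasTemperateGrowth_conj h.hasTemperateGrowth
  have hh' := hasTemperateGrowth_conj h'.hasTemperateGrowth
  refine ⟨smulLeftCLM ℂ (fun x ↦ conj (h' x)) f - smulLeftCLM ℂ (fun x ↦ conj (h x)) f',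
    fun φ hφ ↦ ?_⟩
  have hint (g₁ g₂ : 𝓢(E, ℂ)) : Integrable fun x ↦ smulLeftCLM ℂ φ g₁ x * conj (g₂ x) := by
    convert (smulLeftCLM ℂ (fun x ↦ conj (g₂ x)) (smulLeftCLM ℂ φ g₁)).integrable
      (μ := volume) using 2 with x
    rw [smulLeftCLM_apply_apply (hasTemperateGrowth_conj g₂.hasTemperateGrowth), smul_eq_mul,
      mul_comm]
  rw [commutator_apply, toL2_sub, inner_sub_right, inner_toL2_fourierMultiplierCLM hp,
    inner_toL2_toL2_eq _ _ volume, inner_toL2_toL2_eq _ _ volume]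
  simp only [RCLike.inner_apply]
  rw [← integral_sub (hint f h') (hint f' h)]
  simp only [sub_apply, smulLeftCLM_apply_apply hh, smulLeftCLM_apply_apply hh',
    smulLeftCLM_apply_apply hφ, smul_eq_mul]
  congr! 2
  ring

lemma inner_commutator_eq_integral_planeWave {Z : Type*} [MeasurableSpace Z] {ν : Measure Z}
    [SFinite ν] {k : Z → ℂ} {η : Z → E} {p φ : E → ℂ} (hp : p.HasTemperateGrowth)
    (hφ : φ.HasTemperateGrowth) (hk : AEStronglyMeasurable k ν) (hη : AEStronglyMeasurable η ν)
    (hint : Integrable (fun z ↦ ‖η z‖ * ‖k z‖) ν)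
    (h : ∀ x, φ x - φ 0 = ∫ z, k z * (planeWave (η z) x - 1) ∂ν) (f g : 𝓢(E, ℂ)) :
    inner ℂ (g.toLp 2) ((⁅fourierMultiplierCLM ℂ p, smulLeftCLM ℂ φ⁆ f).toLp 2) =
      ∫ z, k z * inner ℂ (g.toLp 2)
        ((⁅fourierMultiplierCLM ℂ p, smulLeftCLM ℂ (planeWave (η z))⁆ f).toLp 2) ∂ν := by
  obtain ⟨H, hH⟩ := exists_inner_commutator_eq_integral hp f g
  have hH_zero : ∫ x, H x = 0 := by
    have := hH (fun _ ↦ 1) (.const 1)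
    simpa [commutator_apply, toL2_sub] using this.symm
  have sub_const (ψ : E → ℂ) (hψ : ψ.HasTemperateGrowth) (c : ℂ) :
      ∫ x, ψ x * H x = ∫ x, (ψ x - c) * H x := by
    have hψH : Integrable fun x ↦ ψ x * H x := by
      convert (smulLeftCLM ℂ ψ H).integrable (μ := volume) using 2 with x
      rw [smulLeftCLM_apply_apply hψ, smul_eq_mul]
    simp only [sub_mul]
    rw [integral_sub hψH (H.integrable.const_mul c), integral_const_mul, hH_zero, mul_zero,
      sub_zero]
  have hFubini : Integrable (fun w : E × Z ↦ k w.2 * (planeWave (η w.2) w.1 - 1) * H w.1)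
      (volume.prod ν) := by
    refine (((H.integrable_pow_mul volume 1).mul_prod hint).const_mul (2 * π)).mono' ?_
      (.of_forall fun w ↦ ?_)
    · have hwave := continuous_planeWave.comp_aestronglyMeasurable
        (μ := (volume : Measure E).prod ν) (hη.comp_snd.prodMk measurable_fst.aestronglyMeasurable)
      exact (hk.comp_snd.mul (hwave.sub aestronglyMeasurable_const)).mul
        H.continuous.aestronglyMeasurable.comp_fst
    · rw [norm_mul, norm_mul]
      have := norm_planeWave_sub_one_le (η w.2) w.1
      calc ‖k w.2‖ * ‖planeWave (η w.2) w.1 - 1‖ * ‖H w.1‖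
          ≤ ‖k w.2‖ * (2 * π * (‖η w.2‖ * ‖w.1‖)) * ‖H w.1‖ := by gcongr
        _ = _ := by ring
  calc inner ℂ (g.toLp 2) ((⁅fourierMultiplierCLM ℂ p, smulLeftCLM ℂ φ⁆ f).toLp 2)
      = ∫ x, ∫ z, k z * (planeWave (η z) x - 1) * H x ∂ν := by
        rw [hH φ hφ, sub_const φ hφ (φ 0)]
        simp only [h, integral_mul_const]
    _ = ∫ z, k z * (∫ x, (planeWave (η z) x - 1) * H x) ∂ν := by
        rw [integral_integral_swap hFubini]
        simp only [mul_assoc, integral_const_mul]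
    _ = ∫ z, k z * inner ℂ (g.toLp 2)
          ((⁅fourierMultiplierCLM ℂ p, smulLeftCLM ℂ (planeWave (η z))⁆ f).toLp 2) ∂ν := by
        simp only [hH _ (hasTemperateGrowth_planeWave _),
          ← sub_const _ (hasTemperateGrowth_planeWave _)]

lemma hasCommutatorGain_of_integral_planeWave {Z : Type*} [MeasurableSpace Z] {ν : Measure Z}
    [SFinite ν] {k : Z → ℂ} {η : Z → E} {φ : E → ℂ} (hφ : φ.HasTemperateGrowth)
    (hk : AEStronglyMeasurable k ν) (hη : AEStronglyMeasurable η ν)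
    (hint : ∀ s, 0 ≤ s → Integrable (fun z ↦ ‖η z‖ * bracketPow s (η z) * ‖k z‖) ν)
    (h : ∀ x, φ x - φ 0 = ∫ z, k z * (planeWave (η z) x - 1) ∂ν) : HasCommutatorGain φ := by
  intro r p hp
  obtain ⟨C, hC, hwave⟩ := hp.exists_norm_commutator_planeWave_le
  set I := ∫ z, ‖η z‖ * bracketPow |r - 1| (η z) * ‖k z‖ ∂ν
  have hI : 0 ≤ I := integral_nonneg fun z ↦ by
    have := (bracketPow_pos |r - 1| (η z)).le
    positivity
  refine ⟨C * I, by positivity, fun f ↦ ?_⟩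
  rw [sobolevSeminorm_zero]
  set g := ⁅fourierMultiplierCLM ℂ p, smulLeftCLM ℂ φ⁆ f
  set K := sobolevSeminorm E (r - 1) f
  have hpairing := inner_commutator_eq_integral_planeWave hp.hasTemperateGrowth hφ hk hη
    (by simpa [bracketPow_zero] using hint 0 le_rfl) h f g
  have hpairing_le (z : Z) : ‖inner ℂ (g.toLp 2)
      ((⁅fourierMultiplierCLM ℂ p, smulLeftCLM ℂ (planeWave (η z))⁆ f).toLp 2)‖ ≤
        ‖g.toLp 2‖ * (C * (‖η z‖ * bracketPow |r - 1| (η z)) * K) :=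
    (norm_inner_le_norm _ _).trans (mul_le_mul_of_nonneg_left (hwave (η z) f) (norm_nonneg _))
  have hself : ‖g.toLp 2‖ * ‖g.toLp 2‖ ≤ ‖g.toLp 2‖ * (C * I * K) := by
    rw [← inner_self_eq_norm_mul_norm (𝕜 := ℂ), inner_self_re_eq_norm, hpairing]
    refine (norm_integral_le_of_norm_le ((hint |r - 1| (abs_nonneg _)).const_mul
      (‖g.toLp 2‖ * C * K)) (.of_forall fun z ↦ ?_)).trans_eq ?_
    · rw [norm_mul]
      refine (mul_le_mul_of_nonneg_left (hpairing_le z) (norm_nonneg _)).trans_eq ?_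
      ring
    · rw [integral_const_mul]
      ring
  rcases (norm_nonneg (g.toLp 2)).eq_or_lt with hzero | hpos
  · rw [← hzero]
    positivity
  · exact le_of_mul_le_mul_left hself hpos

end Superposition

section Gaussian

open scoped ContDiff

variable {E F : Type*} [NormedAddCommGroup E] [NormedAddCommGroup F] [NormedSpace ℝ F]

lemma exists_exp_neg_mul_norm_sq_le {b : ℝ} (hb : 0 < b) (s : ℝ) :
    ∃ C, 0 ≤ C ∧ ∀ x : E, Real.exp (-b * ‖x‖ ^ 2) ≤ C * bracketPow s x := by
  obtain ⟨n, hn⟩ := exists_nat_ge (-s / 2)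
  refine ⟨Real.exp b * n.factorial / b ^ n, by positivity, fun x ↦ ?_⟩
  have hpow : ((1 + ‖x‖ ^ 2) ^ n)⁻¹ ≤ bracketPow s x := by
    rw [bracketPow, ← Real.rpow_natCast, ← Real.rpow_neg (by positivity)]
    exact Real.rpow_le_rpow_of_exponent_le (by linarith [sq_nonneg ‖x‖]) (by linarith)
  have hexp := Real.pow_div_factorial_le_exp (b * (1 + ‖x‖ ^ 2)) (by positivity) n
  calc Real.exp (-b * ‖x‖ ^ 2) = Real.exp b * (Real.exp (b * (1 + ‖x‖ ^ 2)))⁻¹ := by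
        rw [← Real.exp_neg, ← Real.exp_add]
        ring_nf
    _ ≤ Real.exp b * ((b * (1 + ‖x‖ ^ 2)) ^ n / n.factorial)⁻¹ := by gcongr
    _ = Real.exp b * n.factorial / b ^ n * ((1 + ‖x‖ ^ 2) ^ n)⁻¹ := by
        rw [mul_pow]
        field_simp
    _ ≤ _ := by gcongr

lemma integrableOn_rpow_mul_exp_neg_pi_mul_bracketPow {a : ℝ} (ha : 0 < a) (x : E) :
    IntegrableOn (fun τ ↦ τ ^ (a - 1) * Real.exp (-π * bracketPow 2 x * τ ^ 2)) (Set.Ioi 0) := by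
  have := mul_pos Real.pi_pos (bracketPow_pos 2 x)
  simpa only [neg_mul] using integrableOn_rpow_mul_exp_neg_mul_sq this (by linarith)

lemma exists_integral_rpow_mul_exp_eq_mul_bracketPow (E : Type*) [NormedAddCommGroup E] {a : ℝ}
    (ha : 0 < a) : ∃ c : ℝ, 0 < c ∧ ∀ x : E,
      ∫ τ in Set.Ioi 0, τ ^ (a - 1) * Real.exp (-π * bracketPow 2 x * τ ^ 2) =
        c * bracketPow (-a) x := by
  refine ⟨π ^ (-a / 2) * (1 / 2) * Real.Gamma (a / 2),
    mul_pos (by positivity) (Real.Gamma_pos_of_pos (half_pos ha)), fun x ↦ ?_⟩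
  have h := integral_rpow_mul_exp_neg_mul_rpow two_pos (show -1 < a - 1 by linarith)
    (mul_pos Real.pi_pos (bracketPow_pos 2 x))
  simp only [Real.rpow_two, ← neg_mul, sub_add_cancel] at h
  rw [h, Real.mul_rpow Real.pi_pos.le (bracketPow_pos 2 x).le, bracketPow_two, bracketPow]
  ring

lemma integrableOn_rpow_mul_bracketPow_mul_exp {q : ℝ} (hq : -1 < q) (s : ℝ) :
    IntegrableOn (fun τ ↦ τ ^ q * bracketPow s τ * Real.exp (-π * τ ^ 2)) (Set.Ioi 0) := by
  obtain ⟨C, _, h⟩ := exists_exp_neg_mul_norm_sq_le (E := ℝ) (half_pos Real.pi_pos) (-s)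
  refine ((integrableOn_rpow_mul_exp_neg_mul_sq (half_pos Real.pi_pos) hq).const_mul C).mono'
    ?_ ((ae_restrict_iff' measurableSet_Ioi).2 (.of_forall fun τ (hτ : 0 < τ) ↦ ?_))
  · refine Measurable.aestronglyMeasurable ?_
    unfold bracketPow
    fun_prop
  have hpos := bracketPow_pos s τ
  have hτ := h τ
  rw [Real.norm_of_nonneg (by positivity)]
  rw [bracketPow_neg, ← div_eq_mul_inv, le_div_iff₀ hpos, Real.norm_eq_abs, sq_abs] at hτ
  calc τ ^ q * bracketPow s τ * Real.exp (-π * τ ^ 2)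
      = τ ^ q * Real.exp (-(π / 2) * τ ^ 2) * (Real.exp (-(π / 2) * τ ^ 2) * bracketPow s τ) := by
        rw [show -π * τ ^ 2 = -(π / 2) * τ ^ 2 + -(π / 2) * τ ^ 2 by ring, Real.exp_add]
        ring
    _ ≤ τ ^ q * Real.exp (-(π / 2) * τ ^ 2) * C := by gcongr
    _ = _ := mul_comm _ _

section NormedSpace

variable [NormedSpace ℝ E]

lemma bracketPow_smul_le {s : ℝ} (hs : 0 ≤ s) (τ : ℝ) (x : E) :
    bracketPow s (τ • x) ≤ bracketPow s τ * bracketPow s x := by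
  simp only [bracketPow]
  rw [← Real.mul_rpow (by positivity) (by positivity), norm_smul, mul_pow]
  exact Real.rpow_le_rpow (by positivity) (by linarith [sq_nonneg ‖τ‖, sq_nonneg ‖x‖])
    (by positivity)

lemma exists_schwartzMap_coe_eq_of_isSymbol {p : E → F} (hp : ∀ s, IsSymbol s p) :
    ∃ f : 𝓢(E, F), ⇑f = p := by
  refine ⟨⟨p, (hp 0).contDiff, fun k n ↦ ?_⟩, rfl⟩
  obtain ⟨C, _, h⟩ := (hp (n - k)).hasSymbolBound n
  refine ⟨C, fun x ↦ ?_⟩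
  calc ‖x‖ ^ k * ‖iteratedFDeriv ℝ n p x‖ ≤ bracketPow k x * (C * bracketPow (-k) x) := by
        rw [bracketPow_natCast, ← sub_sub_cancel_left (n : ℝ) k]
        have := (bracketPow_pos 1 x).le
        gcongr
        · exact norm_le_bracketPow_one x
        · exact h x
    _ = C := by
        rw [mul_left_comm, ← bracketPow_add, add_neg_cancel, bracketPow_zero, mul_one]

end NormedSpace

variable [InnerProductSpace ℝ E]

lemma isSymbol_gaussian (s : ℝ) : IsSymbol s fun x : E ↦ Real.exp (-π * ‖x‖ ^ 2) := by
  refine isSymbol_of_hasFDerivAt (f := fun _ x ↦ Real.exp (-π * ‖x‖ ^ 2)) (c := fun _ ↦ -2 * π)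
    (fun _ ↦ (contDiff_const.mul (contDiff_norm_sq ℝ)).exp) (fun s ↦ ?_) (fun _ x ↦ ?_) s
  · simpa only [Real.norm_of_nonneg (Real.exp_pos _).le] using
      exists_exp_neg_mul_norm_sq_le Real.pi_pos s
  · refine (((hasStrictFDerivAt_norm_sq x).hasFDerivAt.const_mul (-π)).exp).congr_fderiv ?_
    ext y
    simp
    ring

lemma exists_schwartzMap_eq_gaussian (E : Type*) [NormedAddCommGroup E] [InnerProductSpace ℝ E] :
    ∃ G : 𝓢(E, ℂ), ∀ x, G x = Real.exp (-π * ‖x‖ ^ 2) :=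
  (exists_schwartzMap_coe_eq_of_isSymbol fun s ↦
    (isSymbol_gaussian s).clm_comp Complex.ofRealCLM).imp fun _ h ↦ congrFun h

end Gaussian

section Homogeneous

variable {E : Type*} [NormedAddCommGroup E] [InnerProductSpace ℝ E] [FiniteDimensional ℝ E]
  [MeasurableSpace E] [BorelSpace E]

lemma integral_fourier_mul_planeWave_sub_one (f : 𝓢(E, ℂ)) (x : E) :
    ∫ ζ, 𝓕 f ζ * (planeWave ζ x - 1) = f x - f 0 := by
  have hinv (y : E) : f y = ∫ ζ, 𝓕 f ζ * planeWave ζ y := by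
    conv_lhs => rw [← FourierTransform.fourierInv_fourier_eq (F := 𝓢(E, ℂ)) f]
    rw [fourierInv_coe, Real.fourierInv_eq']
    simp [planeWave, mul_comm, real_inner_comm]
  have hint (y : E) : Integrable fun ζ ↦ 𝓕 f ζ * planeWave ζ y :=
    (𝓕 f).integrable.mul_bdd (c := 1)
      (continuous_planeWave.comp (by fun_prop : Continuous fun ζ ↦ (ζ, y))).aestronglyMeasurable
      (.of_forall fun ζ ↦ (norm_planeWave ζ y).le)
  rw [hinv x, hinv 0, ← integral_sub (hint x) (hint 0)]
  simp only [planeWave_zero_right, mul_sub]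

lemma integrable_norm_mul_bracketPow_mul (s : ℝ) (f : 𝓢(E, ℂ)) :
    Integrable fun ζ ↦ ‖ζ‖ * bracketPow s ζ * ‖f ζ‖ := by
  convert (weightCLM s f).integrable_pow_mul volume 1 using 2 with ζ
  rw [weightCLM_apply, norm_mul, norm_ofReal_bracketPow, pow_one, mul_assoc]

lemma integrable_dilation (f : 𝓢(E, ℂ)) {q : ℝ} (hq : -2 < q) {s : ℝ} (hs : 0 ≤ s) :
    Integrable (fun z : ℝ × E ↦ ‖z.1 • z.2‖ * bracketPow s (z.1 • z.2) *
        ‖(z.1 ^ q * Real.exp (-π * z.1 ^ 2) : ℝ) * f z.2‖)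
      ((volume.restrict (Set.Ioi 0)).prod volume) := by
  refine ((integrableOn_rpow_mul_bracketPow_mul_exp (show -1 < q + 1 by linarith) s).mul_prod
    (integrable_norm_mul_bracketPow_mul s f)).mono' ?_ ?_
  · have := f.continuous.measurable
    unfold bracketPow
    exact Measurable.aestronglyMeasurable (by fun_prop)
  · filter_upwards [Measure.quasiMeasurePreserving_fst.ae (ae_restrict_mem measurableSet_Ioi)]
      with z (hz : 0 < z.1)
    have hpos := (bracketPow_pos s (z.1 • z.2)).le
    have hcoef : 0 ≤ z.1 ^ q * Real.exp (-π * z.1 ^ 2) := by positivity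
    rw [Real.norm_of_nonneg (by positivity), norm_mul, Complex.norm_real,
      Real.norm_of_nonneg hcoef, norm_smul, Real.norm_of_nonneg hz.le]
    calc z.1 * ‖z.2‖ * bracketPow s (z.1 • z.2) * (z.1 ^ q * Real.exp (-π * z.1 ^ 2) * ‖f z.2‖)
        ≤ z.1 * ‖z.2‖ * (bracketPow s z.1 * bracketPow s z.2) *
            (z.1 ^ q * Real.exp (-π * z.1 ^ 2) * ‖f z.2‖) := by
          gcongr
          exact bracketPow_smul_le hs _ _
      _ = _ := by
          rw [Real.rpow_add_one hz.ne']
          ring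

lemma hasCommutatorGain_of_integral_dilation (f : 𝓢(E, ℂ)) {q : ℝ} (hq : -2 < q) {φ : E → ℂ}
    (hφ : φ.HasTemperateGrowth)
    (h : ∀ x, φ x - φ 0 = ∫ τ in Set.Ioi 0,
      (τ ^ q * Real.exp (-π * τ ^ 2) : ℝ) * (f (τ • x) - f 0)) : HasCommutatorGain φ := by
  have hint (s : ℝ) (hs : 0 ≤ s) := integrable_dilation (𝓕 f) hq hs
  have hmeas : Measurable fun z : ℝ × E ↦
      ((z.1 ^ q * Real.exp (-π * z.1 ^ 2) : ℝ) : ℂ) * 𝓕 f z.2 := by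
    have := (𝓕 f).continuous.measurable
    fun_prop
  refine hasCommutatorGain_of_integral_planeWave hφ hmeas.aestronglyMeasurable
    (Measurable.aestronglyMeasurable (by fun_prop)) hint fun x ↦ ?_
  have hwave : Continuous fun z : ℝ × E ↦ planeWave (z.1 • z.2) x :=
    continuous_planeWave.comp (by fun_prop : Continuous fun z : ℝ × E ↦ (z.1 • z.2, x))
  rw [h x, integral_prod]
  · simp only [planeWave_smul_left, mul_assoc, integral_const_mul,
      integral_fourier_mul_planeWave_sub_one]
  · refine ((hint 0 le_rfl).const_mul (2 * π * ‖x‖)).mono'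
      (hmeas.mul (hwave.measurable.sub_const 1)).aestronglyMeasurable (.of_forall fun z ↦ ?_)
    rw [norm_mul, bracketPow_zero, mul_one]
    refine (mul_le_mul_of_nonneg_left (norm_planeWave_sub_one_le _ x) (norm_nonneg _)).trans_eq ?_
    ring

lemma hasCommutatorGain_homogeneous_mul_bracketPow {P : E → ℂ} {a d : ℝ}
    (hP : P.HasTemperateGrowth) (hhom : ∀ τ : ℝ, 0 < τ → ∀ x, P (τ • x) = (τ ^ d : ℝ) * P x)
    (ha : 0 < a) (hd : d < a + 1) : HasCommutatorGain fun x ↦ P x * bracketPow (-a) x := by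
  obtain ⟨G, hG⟩ := exists_schwartzMap_eq_gaussian E
  obtain ⟨c, hc, hc_integral⟩ := exists_integral_rpow_mul_exp_eq_mul_bracketPow E ha
  set f : 𝓢(E, ℂ) := (c : ℂ)⁻¹ • smulLeftCLM ℂ P G
  let γ (x : E) (τ : ℝ) : ℝ := τ ^ (a - 1) * Real.exp (-π * bracketPow 2 x * τ ^ 2)
  have hγ (x : E) : IntegrableOn (fun τ ↦ (c : ℂ)⁻¹ * P x * γ x τ) (Set.Ioi 0) :=
    (integrableOn_rpow_mul_exp_neg_pi_mul_bracketPow ha x).ofReal.const_mul _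
  have hγ_integral (x : E) :
      ∫ τ in Set.Ioi 0, (c : ℂ)⁻¹ * P x * γ x τ = P x * bracketPow (-a) x := by
    have : (c : ℂ) ≠ 0 := mod_cast hc.ne'
    rw [integral_const_mul, integral_complex_ofReal, hc_integral, Complex.ofReal_mul]
    field_simp
  have hf (x : E) {τ : ℝ} (hτ : 0 < τ) :
      (τ ^ (a - 1 - d) * Real.exp (-π * τ ^ 2) : ℝ) * f (τ • x) = (c : ℂ)⁻¹ * P x * γ x τ := by
    have hexp : Real.exp (-π * bracketPow 2 x * τ ^ 2) =
        Real.exp (-π * τ ^ 2) * Real.exp (-π * ‖τ • x‖ ^ 2) := by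
      rw [← Real.exp_add, norm_smul, Real.norm_of_nonneg hτ.le, bracketPow_two]
      ring_nf
    have hpow : τ ^ (a - 1) = τ ^ (a - 1 - d) * τ ^ d := by
      rw [← Real.rpow_add hτ, sub_add_cancel]
    simp only [f, γ, smul_apply, smulLeftCLM_apply_apply hP, hhom τ hτ, hG, smul_eq_mul, hexp, hpow]
    push_cast
    ring
  refine hasCommutatorGain_of_integral_dilation f (show -2 < a - 1 - d by linarith)
    (by have := hasTemperateGrowth_bracketPow (E := E) (-a); fun_prop) fun x ↦ ?_
  rw [← hγ_integral, ← hγ_integral, ← integral_sub (hγ x) (hγ 0)]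
  refine setIntegral_congr_fun measurableSet_Ioi fun τ hτ ↦ ?_
  simp only [← hf _ hτ, smul_zero, mul_sub]

lemma hasCommutatorGain_inner_mul_bracketPow_neg_one (e : E) :
    HasCommutatorGain fun x ↦ (inner ℝ e x : ℂ) * bracketPow (-1) x := by
  refine hasCommutatorGain_homogeneous_mul_bracketPow (d := 1) (by fun_prop) (fun τ _ x ↦ ?_)
    one_pos (by norm_num)
  simp [inner_smul_right]

lemma hasCommutatorGain_bracketPow {s : ℝ} (hs : s < 1) :
    HasCommutatorGain fun x : E ↦ (bracketPow s x : ℂ) := by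
  have hsplit : (fun x : E ↦ (bracketPow s x : ℂ)) =
      (fun x ↦ (bracketPow (s - 2) x : ℂ)) +
        fun x ↦ ((‖x‖ ^ 2 : ℝ) : ℂ) * bracketPow (s - 2) x := by
    ext x
    rw [Pi.add_apply, ← one_add_mul, ← sub_add_cancel s 2, bracketPow_add, bracketPow_two,
      add_sub_cancel_right]
    push_cast
    ring
  have hgrowth := hasTemperateGrowth_bracketPow (E := E) (s - 2)
  have hnorm : (fun x : E ↦ ((‖x‖ ^ 2 : ℝ) : ℂ)).HasTemperateGrowth := by fun_prop
  rw [hsplit]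
  refine .add hgrowth (by fun_prop) ?_ ?_
  · simpa using hasCommutatorGain_homogeneous_mul_bracketPow (E := E) (P := fun _ ↦ 1) (a := 2 - s)
      (d := 0) (.const 1) (by simp) (by linarith) (by linarith)
  · simpa using hasCommutatorGain_homogeneous_mul_bracketPow (E := E) (a := 2 - s) (d := 2)
      hnorm (fun τ _ x ↦ by simp [norm_smul, mul_pow]) (by linarith) (by linarith)

end Homogeneous

section Coordinates

variable {E : Type*} [NormedAddCommGroup E] [InnerProductSpace ℝ E] [FiniteDimensional ℝ E]

/-- The coordinates of `(1, x)` in an orthonormal basis of `ℝ × E`, so that `⟨x⟩ ^ 2` is the sum of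
their squares. -/
def bracketCoord : Option (Fin (Module.finrank ℝ E)) → E → ℂ
  | none, _ => 1
  | some j, x => inner ℝ (stdOrthonormalBasis ℝ E j) x

/-- The coordinates of the unit vector `(1, x) / ⟨x⟩`. -/
def unitBracketCoord (j : Option (Fin (Module.finrank ℝ E))) (x : E) : ℂ :=
  bracketCoord j x * bracketPow (-1) x

lemma hasTemperateGrowth_bracketCoord (j : Option (Fin (Module.finrank ℝ E))) :
    (bracketCoord j : E → ℂ).HasTemperateGrowth := by
  rcases j with _ | j <;> unfold bracketCoord <;> fun_prop

lemma hasTemperateGrowth_unitBracketCoord (j : Option (Fin (Module.finrank ℝ E))) :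
    (unitBracketCoord j : E → ℂ).HasTemperateGrowth :=
  (hasTemperateGrowth_bracketCoord j).mul (hasTemperateGrowth_bracketPow (-1))

lemma sum_bracketCoord_sq (x : E) : ∑ j, bracketCoord j x ^ 2 = bracketPow 2 x := by
  rw [Fintype.sum_option, bracketPow_two, ← (stdOrthonormalBasis ℝ E).sum_sq_inner_right]
  simp [bracketCoord]

lemma norm_bracketCoord_le (j : Option (Fin (Module.finrank ℝ E))) (x : E) :
    ‖bracketCoord j x‖ ≤ bracketPow 1 x := by
  rcases j with _ | j
  · simpa [bracketCoord] using one_le_bracketPow zero_le_one x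
  · rw [bracketCoord, Complex.norm_real]
    refine (norm_inner_le_norm _ _).trans ?_
    simpa using norm_le_bracketPow_one x

lemma norm_unitBracketCoord_le (j : Option (Fin (Module.finrank ℝ E))) (x : E) :
    ‖unitBracketCoord j x‖ ≤ 1 := by
  rw [unitBracketCoord, norm_mul, norm_ofReal_bracketPow, bracketPow_neg, ← div_eq_mul_inv]
  exact div_le_one_of_le₀ (norm_bracketCoord_le j x) (bracketPow_pos 1 x).le

/-- Multiplication by `bracketCoord j` on Schwartz functions. -/
def coordCLM (j : Option (Fin (Module.finrank ℝ E))) : 𝓢(E, ℂ) →L[ℂ] 𝓢(E, ℂ) :=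
  smulLeftCLM ℂ (bracketCoord j)

/-- Multiplication by `unitBracketCoord j` on Schwartz functions. -/
def unitCoordCLM (j : Option (Fin (Module.finrank ℝ E))) : 𝓢(E, ℂ) →L[ℂ] 𝓢(E, ℂ) :=
  smulLeftCLM ℂ (unitBracketCoord j)

lemma weightCLM_neg_one_mul_coordCLM (j : Option (Fin (Module.finrank ℝ E))) :
    weightCLM (-1) * coordCLM j = unitCoordCLM (E := E) j := by
  rw [weightCLM, coordCLM, smulLeftCLM_mul_smulLeftCLM (hasTemperateGrowth_bracketPow _)
    (hasTemperateGrowth_bracketCoord j), mul_comm]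
  rfl

lemma coordCLM_mul_weightCLM_neg_one (j : Option (Fin (Module.finrank ℝ E))) :
    coordCLM j * weightCLM (-1) = unitCoordCLM (E := E) j := by
  rw [weightCLM, coordCLM, smulLeftCLM_mul_smulLeftCLM (hasTemperateGrowth_bracketCoord j)
    (hasTemperateGrowth_bracketPow _)]
  rfl

lemma weightCLM_mul_coordCLM (s : ℝ) (j : Option (Fin (Module.finrank ℝ E))) :
    weightCLM s * coordCLM j = coordCLM (E := E) j * weightCLM s := by
  rw [weightCLM, coordCLM, smulLeftCLM_mul_smulLeftCLM (hasTemperateGrowth_bracketPow _)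
    (hasTemperateGrowth_bracketCoord j), smulLeftCLM_mul_smulLeftCLM
    (hasTemperateGrowth_bracketCoord j) (hasTemperateGrowth_bracketPow _), mul_comm]

lemma sum_coordCLM_mul_coordCLM :
    ∑ j, coordCLM j * coordCLM j = (weightCLM 2 : 𝓢(E, ℂ) →L[ℂ] 𝓢(E, ℂ)) := by
  simp only [coordCLM, smulLeftCLM_mul_smulLeftCLM (hasTemperateGrowth_bracketCoord _)
    (hasTemperateGrowth_bracketCoord _)]
  rw [← smulLeftCLM_sum fun j _ ↦
    (hasTemperateGrowth_bracketCoord j).mul (hasTemperateGrowth_bracketCoord j), weightCLM]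
  congr! 1
  ext x
  simp [← sum_bracketCoord_sq, sq]

lemma sum_coordCLM_mul_unitCoordCLM :
    ∑ j, coordCLM j * unitCoordCLM j = (weightCLM 1 : 𝓢(E, ℂ) →L[ℂ] 𝓢(E, ℂ)) := by
  simp only [← coordCLM_mul_weightCLM_neg_one, ← mul_assoc, ← Finset.sum_mul,
    sum_coordCLM_mul_coordCLM, weightCLM_mul]
  norm_num

lemma sum_unitCoordCLM_mul_coordCLM :
    ∑ j, unitCoordCLM j * coordCLM j = (weightCLM 1 : 𝓢(E, ℂ) →L[ℂ] 𝓢(E, ℂ)) := by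
  simp only [← weightCLM_neg_one_mul_coordCLM, mul_assoc, ← Finset.mul_sum,
    sum_coordCLM_mul_coordCLM, weightCLM_mul]
  norm_num

lemma sum_unitCoordCLM_mul_self :
    ∑ j, unitCoordCLM j * unitCoordCLM j = (1 : 𝓢(E, ℂ) →L[ℂ] 𝓢(E, ℂ)) := by
  calc ∑ j, unitCoordCLM j * unitCoordCLM j
      = weightCLM (-1) * ∑ j, coordCLM j * unitCoordCLM j := by
        simp only [Finset.mul_sum, ← mul_assoc, weightCLM_neg_one_mul_coordCLM]
    _ = 1 := by
        rw [sum_coordCLM_mul_unitCoordCLM, weightCLM_mul, neg_add_cancel, weightCLM_zero]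

variable [MeasurableSpace E] [BorelSpace E]

lemma fourier_smulLeftCLM_inner (e : E) (f : 𝓢(E, ℂ)) (ξ : E) :
    𝓕 (smulLeftCLM ℂ (fun x ↦ (inner ℝ e x : ℂ)) f) ξ =
      -(2 * π * Complex.I)⁻¹ * fderiv ℝ (𝓕 f : 𝓢(E, ℂ)) ξ e := by
  have hmul : smulLeftCLM ℂ (fun x ↦ inner ℝ x e) f =
      smulLeftCLM ℂ (fun x ↦ (inner ℝ e x : ℂ)) f := by
    ext x
    rw [smulLeftCLM_apply_apply (by fun_prop), smulLeftCLM_apply_apply (by fun_prop),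
      real_inner_comm]
    rfl
  have hderiv := DFunLike.congr_fun (lineDerivOp_fourier_eq f e) ξ
  rw [lineDerivOp_apply_eq_fderiv, hmul, FourierTransform.fourier_smul, smul_apply,
    smul_eq_mul] at hderiv
  rw [hderiv]
  field_simp [Complex.I_ne_zero, Real.pi_ne_zero]

lemma commutator_inner {p : E → ℂ} {r : ℝ} (hp : IsSymbol r p) (e : E) :
    ⁅fourierMultiplierCLM ℂ p, smulLeftCLM ℂ fun x ↦ (inner ℝ e x : ℂ)⁆ =
      fourierMultiplierCLM ℂ fun ξ ↦ (2 * π * Complex.I)⁻¹ * fderiv ℝ p ξ e := by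
  have hgrowth : (fun ξ ↦ (2 * π * Complex.I)⁻¹ * fderiv ℝ p ξ e).HasTemperateGrowth := by
    have := (hp.fderiv.clm_comp (.apply ℝ ℂ e)).hasTemperateGrowth
    exact (Function.HasTemperateGrowth.const _).mul this
  ext1 f
  apply (FourierTransform.fourierCLE ℂ 𝓢(E, ℂ)).injective
  ext ξ
  have hleibniz : fderiv ℝ (𝓕 (fourierMultiplierCLM ℂ p f) : 𝓢(E, ℂ)) ξ e =
      p ξ * fderiv ℝ (𝓕 f : 𝓢(E, ℂ)) ξ e + 𝓕 f ξ * fderiv ℝ p ξ e := by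
    have hcoe : ⇑(𝓕 (fourierMultiplierCLM ℂ p f) : 𝓢(E, ℂ)) = p * 𝓕 f := by
      ext
      rw [fourier_fourierMultiplierCLM, smulLeftCLM_apply_apply hp.hasTemperateGrowth]
      rfl
    rw [hcoe, fderiv_mul (hp.contDiff.differentiable (by simp) ξ) (𝓕 f).differentiableAt]
    rfl
  rw [commutator_apply]
  simp only [map_sub, sub_apply, FourierTransform.fourierCLE_apply, fourier_smulLeftCLM_inner,
    hleibniz]
  simp only [fourier_fourierMultiplierCLM, smulLeftCLM_apply_apply hp.hasTemperateGrowth,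
    smulLeftCLM_apply_apply hgrowth, fourier_smulLeftCLM_inner, smul_eq_mul]
  ring

lemma IsSymbol.exists_commutator_coordCLM {r : ℝ} {p : E → ℂ} (hp : IsSymbol r p)
    (j : Option (Fin (Module.finrank ℝ E))) : ∃ a, IsSymbol (r - 1) a ∧
      ⁅fourierMultiplierCLM ℂ p, coordCLM j⁆ = fourierMultiplierCLM ℂ a := by
  rcases j with _ | j
  · refine ⟨_, hp.fderiv.clm_comp 0, ?_⟩
    have hone : coordCLM none = (1 : 𝓢(E, ℂ) →L[ℂ] 𝓢(E, ℂ)) := by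
      rw [coordCLM, show (bracketCoord none : E → ℂ) = fun _ ↦ 1 from rfl, smulLeftCLM_const,
        one_smul]
      rfl
    simp [hone, Ring.lie_def, fourierMultiplierCLM_const]
  · let e := stdOrthonormalBasis ℝ E j
    let L : (E →L[ℝ] ℂ) →L[ℝ] ℂ := (2 * π * Complex.I)⁻¹ • .apply ℝ ℂ e
    exact ⟨_, hp.fderiv.clm_comp L, commutator_inner hp e⟩

end Coordinates

section Conjugation

variable {E : Type*} [NormedAddCommGroup E] [InnerProductSpace ℝ E]

/-- The conjugate `⟨x⟩ ^ m A ⟨x⟩ ^ (-m)` of an operator by a power of the weight. -/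
def conjWeight (m : ℝ) (A : 𝓢(E, ℂ) →L[ℂ] 𝓢(E, ℂ)) : 𝓢(E, ℂ) →L[ℂ] 𝓢(E, ℂ) :=
  weightCLM m * A * weightCLM (-m)

lemma sub_conjWeight (m : ℝ) (A : 𝓢(E, ℂ) →L[ℂ] 𝓢(E, ℂ)) :
    A - conjWeight m A = ⁅A, weightCLM m⁆ * weightCLM (-m) := by
  rw [Ring.lie_def, sub_mul, mul_assoc A, weightCLM_mul, add_neg_cancel, weightCLM_zero, mul_one,
    conjWeight]

lemma commutator_weightCLM (m : ℝ) (A : 𝓢(E, ℂ) →L[ℂ] 𝓢(E, ℂ)) :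
    ⁅A, weightCLM m⁆ = (A - conjWeight m A) * weightCLM m := by
  rw [sub_conjWeight, mul_assoc, weightCLM_mul, neg_add_cancel, weightCLM_zero, mul_one]

lemma conjWeight_add (s t : ℝ) (A : 𝓢(E, ℂ) →L[ℂ] 𝓢(E, ℂ)) :
    conjWeight (s + t) A = conjWeight s (conjWeight t A) := by
  simp only [conjWeight, ← weightCLM_mul s t, neg_add_rev, ← weightCLM_mul (-t) (-s), mul_assoc]

variable [FiniteDimensional ℝ E]

lemma commutator_conjWeight_coordCLM (m : ℝ) (A : 𝓢(E, ℂ) →L[ℂ] 𝓢(E, ℂ))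
    (j : Option (Fin (Module.finrank ℝ E))) :
    ⁅conjWeight m A, coordCLM j⁆ = conjWeight m ⁅A, coordCLM j⁆ := by
  simp only [Ring.lie_def, conjWeight, mul_sub, sub_mul, mul_assoc, ← weightCLM_mul_coordCLM]
  simp only [← mul_assoc, weightCLM_mul_coordCLM]

lemma sub_sum_unitCoordCLM (A B : 𝓢(E, ℂ) →L[ℂ] 𝓢(E, ℂ)) :
    A - ∑ j, unitCoordCLM j * B * unitCoordCLM j =
      ∑ j, (unitCoordCLM j * (A - B) * unitCoordCLM j - unitCoordCLM j * ⁅A, unitCoordCLM j⁆) := by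
  calc A - ∑ j, unitCoordCLM j * B * unitCoordCLM j
      = ∑ j, (unitCoordCLM j * unitCoordCLM j * A - unitCoordCLM j * B * unitCoordCLM j) := by
        rw [Finset.sum_sub_distrib, ← Finset.sum_mul, sum_unitCoordCLM_mul_self, one_mul]
    _ = _ := Finset.sum_congr rfl fun j _ ↦ by
        rw [Ring.lie_def]
        noncomm_ring

lemma conjWeight_one_eq_sum (A : 𝓢(E, ℂ) →L[ℂ] 𝓢(E, ℂ)) :
    conjWeight 1 A = ∑ j, unitCoordCLM j * A * unitCoordCLM j -
      ∑ j, unitCoordCLM j * ⁅A, coordCLM j⁆ * weightCLM (-1) := by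
  rw [conjWeight, ← sum_unitCoordCLM_mul_coordCLM, Finset.sum_mul, Finset.sum_mul,
    ← Finset.sum_sub_distrib]
  refine Finset.sum_congr rfl fun j _ ↦ ?_
  rw [Ring.lie_def, ← coordCLM_mul_weightCLM_neg_one]
  noncomm_ring

lemma conjWeight_neg_one_eq_sum (A : 𝓢(E, ℂ) →L[ℂ] 𝓢(E, ℂ)) :
    conjWeight (-1) A = ∑ j, unitCoordCLM j * A * unitCoordCLM j +
      ∑ j, weightCLM (-1) * ⁅A, coordCLM j⁆ * unitCoordCLM j := by
  rw [conjWeight, neg_neg, ← sum_coordCLM_mul_unitCoordCLM, Finset.mul_sum,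
    ← Finset.sum_add_distrib]
  refine Finset.sum_congr rfl fun j _ ↦ ?_
  rw [Ring.lie_def, ← weightCLM_neg_one_mul_coordCLM]
  noncomm_ring

end Conjugation

section ConjugationGain

variable {E : Type*} [NormedAddCommGroup E] [InnerProductSpace ℝ E] [FiniteDimensional ℝ E]
  [MeasurableSpace E] [BorelSpace E]

lemma HasCommutatorGain.mapsSobolev_smulLeftCLM {φ : E → ℂ} {C : ℝ} (h : HasCommutatorGain φ)
    (hφ : φ.HasTemperateGrowth) (hC : ∀ x, ‖φ x‖ ≤ C) (s : ℝ) :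
    MapsSobolev s s (smulLeftCLM ℂ φ) := by
  have hbessel : MapsSobolev s 0 (besselCLM s : 𝓢(E, ℂ) →L[ℂ] 𝓢(E, ℂ)) := by
    have := (isSymbol_ofReal_bracketPow (E := E) s).mapsSobolev 0
    rwa [zero_add] at this
  have hcomm : MapsSobolev s 0 ⁅besselCLM s, smulLeftCLM ℂ φ⁆ :=
    (h (isSymbol_ofReal_bracketPow s)).mono (by linarith)
  obtain ⟨D, hD, hbound⟩ : MapsSobolev s 0 (besselCLM s * smulLeftCLM ℂ φ) := by
    convert ((mapsSobolev_smulLeftCLM_zero hφ hC).mul hbessel).add hcomm using 1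
    rw [Ring.lie_def]
    abel
  refine ⟨D, hD, fun f ↦ ?_⟩
  simpa only [zero_add, ContinuousLinearMap.mul_def, ContinuousLinearMap.comp_apply,
    sobolevSeminorm_besselCLM] using hbound f

lemma hasCommutatorGain_unitBracketCoord (j : Option (Fin (Module.finrank ℝ E))) :
    HasCommutatorGain (unitBracketCoord j : E → ℂ) := by
  rcases j with _ | j
  · convert hasCommutatorGain_bracketPow (E := E) (show (-1 : ℝ) < 1 by norm_num) using 1
    ext x
    exact one_mul _
  · exact hasCommutatorGain_inner_mul_bracketPow_neg_one _

lemma mapsSobolev_unitCoordCLM (j : Option (Fin (Module.finrank ℝ E))) (s : ℝ) :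
    MapsSobolev s s (unitCoordCLM j : 𝓢(E, ℂ) →L[ℂ] 𝓢(E, ℂ)) :=
  (hasCommutatorGain_unitBracketCoord j).mapsSobolev_smulLeftCLM
    (hasTemperateGrowth_unitBracketCoord j) (norm_unitBracketCoord_le j) s

lemma mapsSobolev_weightCLM {m : ℝ} (hm : m ≤ 0) (s : ℝ) :
    MapsSobolev s s (weightCLM m : 𝓢(E, ℂ) →L[ℂ] 𝓢(E, ℂ)) := by
  refine (hasCommutatorGain_bracketPow (hm.trans_lt one_pos)).mapsSobolev_smulLeftCLM
    (hasTemperateGrowth_bracketPow m) (C := 1) (fun x ↦ ?_) s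
  rw [norm_ofReal_bracketPow]
  exact bracketPow_le_one hm x

/-- Conjugating a Fourier multiplier with a symbol of order `r` by `⟨x⟩ ^ m` changes it only by an
operator of order `r - 1`. -/
def HasConjugationGain (E : Type*) [NormedAddCommGroup E] [InnerProductSpace ℝ E]
    [FiniteDimensional ℝ E] [MeasurableSpace E] [BorelSpace E] (m : ℝ) : Prop :=
  ∀ ⦃r : ℝ⦄ ⦃p : E → ℂ⦄, IsSymbol r p →
    MapsSobolev (r - 1) 0 (fourierMultiplierCLM ℂ p - conjWeight m (fourierMultiplierCLM ℂ p))

lemma hasConjugationGain_of_nonneg_of_lt_one {m : ℝ} (h0 : 0 ≤ m) (h1 : m < 1) :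
    HasConjugationGain E m := fun r p hp ↦ by
  rw [sub_conjWeight]
  exact (hasCommutatorGain_bracketPow h1 hp).mul (mapsSobolev_weightCLM (neg_nonpos.2 h0) _)

namespace HasConjugationGain

variable {m r : ℝ} {p : E → ℂ}

lemma mapsSobolev_conjWeight (h : HasConjugationGain E m) (hp : IsSymbol r p) :
    MapsSobolev r 0 (conjWeight m (fourierMultiplierCLM ℂ p)) := by
  rw [← sub_sub_self (fourierMultiplierCLM ℂ p) (conjWeight m _)]
  exact .sub (zero_add r ▸ hp.mapsSobolev 0) ((h hp).mono (by linarith))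

lemma mapsSobolev_sub_sum_unitCoordCLM (h : HasConjugationGain E m) (hp : IsSymbol r p) :
    MapsSobolev (r - 1) 0 (fourierMultiplierCLM ℂ p -
      ∑ j, unitCoordCLM j * conjWeight m (fourierMultiplierCLM ℂ p) * unitCoordCLM j) := by
  rw [sub_sum_unitCoordCLM]
  refine .sum _ fun j _ ↦ .sub ?_ ?_
  · exact ((mapsSobolev_unitCoordCLM j 0).mul (h hp)).mul (mapsSobolev_unitCoordCLM j _)
  · exact (mapsSobolev_unitCoordCLM j 0).mul (hasCommutatorGain_unitBracketCoord j hp)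

lemma mapsSobolev_commutator_conjWeight_coordCLM (h : HasConjugationGain E m)
    (hp : IsSymbol r p) (j : Option (Fin (Module.finrank ℝ E))) :
    MapsSobolev (r - 1) 0 ⁅conjWeight m (fourierMultiplierCLM ℂ p), coordCLM j⁆ := by
  obtain ⟨a, ha, hcomm⟩ := hp.exists_commutator_coordCLM j
  rw [commutator_conjWeight_coordCLM, hcomm]
  exact h.mapsSobolev_conjWeight ha

lemma add_one (h : HasConjugationGain E m) : HasConjugationGain E (m + 1) := fun r p hp ↦ by
  rw [add_comm, conjWeight_add, conjWeight_one_eq_sum, ← sub_add]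
  refine (h.mapsSobolev_sub_sum_unitCoordCLM hp).add (.sum _ fun j _ ↦ ?_)
  exact ((mapsSobolev_unitCoordCLM j 0).mul (h.mapsSobolev_commutator_conjWeight_coordCLM hp j)).mul
    (mapsSobolev_weightCLM (by norm_num) _)

lemma sub_one (h : HasConjugationGain E m) : HasConjugationGain E (m - 1) := fun r p hp ↦ by
  rw [sub_eq_neg_add m, conjWeight_add, conjWeight_neg_one_eq_sum, ← sub_sub]
  refine (h.mapsSobolev_sub_sum_unitCoordCLM hp).sub (.sum _ fun j _ ↦ ?_)
  exact ((mapsSobolev_weightCLM (by norm_num) 0).mul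
    (h.mapsSobolev_commutator_conjWeight_coordCLM hp j)).mul (mapsSobolev_unitCoordCLM j _)

end HasConjugationGain

lemma hasConjugationGain (m : ℝ) : HasConjugationGain E m := by
  rw [← Int.fract_add_floor m]
  induction ⌊m⌋ with
  | zero =>
    simpa using hasConjugationGain_of_nonneg_of_lt_one (Int.fract_nonneg m) (Int.fract_lt_one m)
  | succ n ih => simpa [add_assoc] using ih.add_one
  | pred n ih => simpa [add_sub_assoc] using ih.sub_one

end ConjugationGain

theorem commutator_bessel_weight_general {E : Type*} [NormedAddCommGroup E] [InnerProductSpace ℝ E]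
    [FiniteDimensional ℝ E] [MeasurableSpace E] [BorelSpace E] (m : ℝ) {r : ℝ} {p : E → ℂ}
    (hp : IsSymbol r p) :
    ∃ C > 0, ∀ u : 𝓢(E, ℂ), ‖(⁅fourierMultiplierCLM ℂ p, weightCLM m⁆ u).toLp 2‖ ≤
      C * sobolevSeminorm E (r - 1) (weightCLM m u) := by
  obtain ⟨C, hC, h⟩ := hasConjugationGain m hp
  refine ⟨C + 1, by positivity, fun u ↦ ?_⟩
  rw [commutator_weightCLM, ← sobolevSeminorm_zero]
  refine (h (weightCLM m u)).trans ?_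
  gcongr
  linarith

section EuclideanSpaceThree

lemma jb_rpow (s : ℝ) (v : V) : jb v ^ s = bracketPow s v := by
  rw [jb, bracketPow, ← Real.rpow_mul (by positivity), one_div_mul_eq_div]

lemma l2norm_eq_norm_toL2 (f : 𝓢(V, ℂ)) : l2norm f = ‖f.toLp 2‖ := by
  rw [norm_toLp' two_ne_zero ENNReal.ofNat_ne_top, l2norm]
  simp

lemma coe_weightCLM_eq_jb_rpow_mul (m : ℝ) (u : 𝓢(V, ℂ)) :
    ⇑(weightCLM m u) = fun v ↦ ((jb v ^ m : ℝ) : ℂ) * u v := by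
  ext v
  rw [weightCLM_apply, jb_rpow]

lemma Hnorm_jb_mul_eq_sobolevSeminorm (k m : ℝ) (u : 𝓢(V, ℂ)) :
    Hnorm k (fun v ↦ ((jb v ^ m : ℝ) : ℂ) * u v) = sobolevSeminorm V k (weightCLM m u) := by
  rw [← coe_weightCLM_eq_jb_rpow_mul, sobolevSeminorm_apply, ← l2norm_eq_norm_toL2, Hnorm, l2norm]
  congr! 3 with ξ
  rw [weightCLM_apply, norm_mul, mul_pow, norm_ofReal_bracketPow, jb_rpow, two_mul, bracketPow_add,
    fourier_coe, sq (bracketPow k ξ)]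

lemma besselOp_eq_besselCLM (r : ℝ) (f : 𝓢(V, ℂ)) : besselOp r f = besselCLM r f := by
  have hcoe : ⇑(weightCLM r (𝓕 f)) = fun ξ ↦ (bracketPow r ξ : ℂ) * 𝓕 (f : V → ℂ) ξ := by
    ext ξ
    rw [weightCLM_apply, fourier_coe]
  change 𝓕⁻ (fun ξ ↦ (bracketPow r ξ : ℂ) * 𝓕 (f : V → ℂ) ξ) = _
  rw [← hcoe, ← fourierInv_coe, ← fourier_besselCLM, FourierTransform.fourierInv_fourier_eq]

lemma besselOp_commutator_eq (m r : ℝ) (u : 𝓢(V, ℂ)) :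
    (fun v ↦ besselOp r (fun w ↦ ((jb w ^ m : ℝ) : ℂ) * u w) v
      - ((jb v ^ m : ℝ) : ℂ) * besselOp r u v) = ⁅besselCLM (E := V) r, weightCLM m⁆ u := by
  ext v
  rw [← coe_weightCLM_eq_jb_rpow_mul, besselOp_eq_besselCLM, besselOp_eq_besselCLM,
    commutator_apply, sub_apply, weightCLM_apply m (besselCLM r u), jb_rpow]

end EuclideanSpaceThree

/-- commutator estimate
`‖[(1-Δ)^{r/2}, ⟨·⟩^m] u‖_{L²} ≤ C ‖⟨·⟩^m u‖_{H^{r-1}}` for Schwartz `u`. -/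
theorem commutator_bessel_weight (m r : ℝ) (hr : 0 < r) :
    ∃ C > 0, ∀ u : 𝓢(V, ℂ),
      l2norm (fun v =>
          besselOp r (fun w => ((jb w ^ m : ℝ) : ℂ) * u w) v
            - ((jb v ^ m : ℝ) : ℂ) * besselOp r (u : V → ℂ) v)
        ≤ C * Hnorm (r - 1) (fun v => ((jb v ^ m : ℝ) : ℂ) * u v) := by
  simp only [besselOp_commutator_eq, l2norm_eq_norm_toL2, Hnorm_jb_mul_eq_sobolevSeminorm]
  exact commutator_bessel_weight_general m (isSymbol_ofReal_bracketPow r)
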